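/- Let q be a nonzero polynomial over ℂ with deg q ≤ n satisfying the orthogonality relations ∫ t^k · q(t) · h(t) dμ(t) = 0 for every integer k with 0 ≤ k ≤ n − 1. Then there exists a polynomial p over ℂ with deg p ≤ n − 1 such that q(z)·f(z) − p(z) = ∫ q(t)·h(t)/(t − z) dμ(t) for all z with |z| > R₀, and there exists C > 0 with |q(z)f(z) − p(z)| ≤ C·|z|^{−(n+1)} for all z with |z| ≥ 2R₀. (Non-Hermitian orthogonality of the denominator implies the Padé interpolation condition at infinity.) -/

import Mathlib

open MeasureTheory Polynomial

/-!
The algebraic identity `tᵏ - zᵏ = (t - z) ∑_{i < k} zⁱ tᵏ⁻¹⁻ⁱ`, divided by `t - z` and integrated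
against `w dμ`, shows that the Cauchy transform of `tᵏ w` is `zᵏ` times that of `w` plus a
polynomial in `z` whose coefficients are moments of `w`. For `w = h`, summing over the monomials
of `q` produces the numerator `p`. For `w = q h` and `k = n`, the moments vanish by orthogonality,
so the remainder is `z⁻ⁿ` times the Cauchy transform of `tⁿ q h`, which is `O(z⁻¹)`.
-/

section CauchyTransform

variable {𝕜 : Type*} [RCLike 𝕜]

/-- The Cauchy transform `z ↦ ∫ w(t) / (t - z) dμ(t)` of the measure `w dμ`. It is meaningful for
`z` off the support of `μ`; elsewhere the integral may take its junk value `0`. -/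
noncomputable def cauchyTransform (μ : Measure 𝕜) (w : 𝕜 → 𝕜) (z : 𝕜) : 𝕜 :=
  ∫ t, w t / (t - z) ∂μ

/-- The numerator paired with the denominator `q` in Padé approximation at infinity of the Cauchy
transform of `h dμ`: the polynomial `z ↦ -∫ (q(t) - q(z)) / (t - z) * h(t) dμ(t)`, encoded
through its expansion in powers of `z` with the moments of `h dμ` in the coefficients. -/
noncomputable def padeNumerator (μ : Measure 𝕜) (h : 𝕜 → 𝕜) (q : 𝕜[X]) : 𝕜[X] :=
  -∑ k ∈ q.support, ∑ i ∈ Finset.range k,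
    C (q.coeff k * ∫ t, t ^ (k - 1 - i) * h t ∂μ) * X ^ i

theorem degree_padeNumerator_lt (μ : Measure 𝕜) (h : 𝕜 → 𝕜) {q : 𝕜[X]} {n : ℕ}
    (hq : q.degree ≤ n) : (padeNumerator μ h q).degree < n := by
  rw [← mem_degreeLT, padeNumerator]
  refine neg_mem (sum_mem fun k hk => sum_mem fun i hi => mem_degreeLT.2 ?_)
  have hin : i < n :=
    (Finset.mem_range.1 hi).trans_le
      ((le_natDegree_of_mem_supp k hk).trans (natDegree_le_of_degree_le hq))
  exact (degree_C_mul_X_pow_le i _).trans_lt (Nat.cast_lt.2 hin)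

theorem eval_padeNumerator (μ : Measure 𝕜) (h : 𝕜 → 𝕜) (q : 𝕜[X]) (z : 𝕜) :
    (padeNumerator μ h q).eval z =
      -∑ k ∈ q.support, q.coeff k *
        ∑ i ∈ Finset.range k, z ^ i * ∫ t, t ^ (k - 1 - i) * h t ∂μ := by
  simp only [padeNumerator, eval_neg, eval_finsetSum, eval_C_mul, eval_X_pow, Finset.mul_sum,
    mul_assoc, mul_comm (z ^ _)]

variable {μ : Measure 𝕜} {R₀ : ℝ} {w : 𝕜 → 𝕜} {z : 𝕜}

theorem integrable_continuous_mul (hμ : ∀ᵐ t ∂μ, ‖t‖ ≤ R₀) (hw : Integrable w μ)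
    {g : 𝕜 → 𝕜} (hg : Continuous g) : Integrable (fun t => g t * w t) μ := by
  obtain ⟨K, hK⟩ :=
    (isCompact_closedBall (0 : 𝕜) R₀).exists_bound_of_continuousOn hg.continuousOn
  refine hw.bdd_mul (c := K) hg.aestronglyMeasurable ?_
  filter_upwards [hμ] with t ht using hK t (mem_closedBall_zero_iff.2 ht)

theorem norm_div_sub_le {t : 𝕜} (ht : ‖t‖ ≤ R₀) (hz : R₀ < ‖z‖) (a : 𝕜) :
    ‖a / (t - z)‖ ≤ ‖a‖ / (‖z‖ - R₀) := by
  have hdist : ‖z‖ - R₀ ≤ ‖t - z‖ := by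
    linarith [norm_sub_norm_le z t, norm_sub_rev z t]
  rw [norm_div]
  exact div_le_div_of_nonneg_left (norm_nonneg a) (sub_pos.2 hz) hdist

theorem integrable_div_sub (hμ : ∀ᵐ t ∂μ, ‖t‖ ≤ R₀) (hw : Integrable w μ) (hz : R₀ < ‖z‖) :
    Integrable (fun t => w t / (t - z)) μ := by
  refine (hw.norm.div_const (‖z‖ - R₀)).mono' ?_ ?_
  · exact (hw.aemeasurable.div (measurable_id.sub_const z).aemeasurable).aestronglyMeasurable
  · filter_upwards [hμ] with t ht using norm_div_sub_le ht hz (w t)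

theorem norm_cauchyTransform_le (hμ : ∀ᵐ t ∂μ, ‖t‖ ≤ R₀) (hw : Integrable w μ)
    (hz : R₀ < ‖z‖) : ‖cauchyTransform μ w z‖ ≤ (∫ t, ‖w t‖ ∂μ) / (‖z‖ - R₀) := by
  rw [← integral_div]
  refine norm_integral_le_of_norm_le (hw.norm.div_const _) ?_
  filter_upwards [hμ] with t ht using norm_div_sub_le ht hz (w t)

theorem cauchyTransform_pow_mul (hμ : ∀ᵐ t ∂μ, ‖t‖ ≤ R₀) (hw : Integrable w μ)
    (hz : R₀ < ‖z‖) (k : ℕ) :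
    cauchyTransform μ (fun t => t ^ k * w t) z =
      z ^ k * cauchyTransform μ w z +
        ∑ i ∈ Finset.range k, z ^ i * ∫ t, t ^ (k - 1 - i) * w t ∂μ := by
  have moment_integrable (i : ℕ) : Integrable (fun t => z ^ i * (t ^ (k - 1 - i) * w t)) μ :=
    (integrable_continuous_mul hμ hw (continuous_pow _)).const_mul _
  simp only [cauchyTransform, ← integral_const_mul]
  rw [← integral_finsetSum _ fun i _ => moment_integrable i,
    ← integral_add ((integrable_div_sub hμ hw hz).const_mul _)
      (integrable_finsetSum _ fun i _ => moment_integrable i)]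
  refine integral_congr_ae ?_
  filter_upwards [hμ] with t ht
  have hzt : t - z ≠ 0 := sub_ne_zero.2 fun h => (h ▸ ht).not_gt hz
  have geom : (∑ i ∈ Finset.range k, z ^ i * t ^ (k - 1 - i)) * (z - t) = z ^ k - t ^ k :=
    geom_sum₂_mul z t k
  simp only [← mul_assoc, ← Finset.sum_mul]
  field_simp
  linear_combination w t * geom

theorem cauchyTransform_eval_mul (hμ : ∀ᵐ t ∂μ, ‖t‖ ≤ R₀) (hw : Integrable w μ)
    (hz : R₀ < ‖z‖) (q : 𝕜[X]) :
    cauchyTransform μ (fun t => q.eval t * w t) z =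
      q.eval z * cauchyTransform μ w z - (padeNumerator μ w q).eval z := by
  have monomial_integrable (k : ℕ) :
      Integrable (fun t => q.coeff k * (t ^ k * w t / (t - z))) μ :=
    (integrable_div_sub hμ (integrable_continuous_mul hμ hw (continuous_pow k)) hz).const_mul _
  calc cauchyTransform μ (fun t => q.eval t * w t) z
      = ∫ t, ∑ k ∈ q.support, q.coeff k * (t ^ k * w t / (t - z)) ∂μ := by
        simp only [cauchyTransform, eval_eq_sum, sum_def, Finset.sum_mul, Finset.sum_div,
          mul_assoc, mul_div_assoc]
    _ = ∑ k ∈ q.support, q.coeff k * cauchyTransform μ (fun t => t ^ k * w t) z := by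
        rw [integral_finsetSum _ fun k _ => monomial_integrable k]
        simp only [integral_const_mul, cauchyTransform]
    _ = q.eval z * cauchyTransform μ w z - (padeNumerator μ w q).eval z := by
        simp only [cauchyTransform_pow_mul hμ hw hz, eval_padeNumerator, sub_neg_eq_add, mul_add,
          Finset.sum_add_distrib, ← mul_assoc, ← Finset.sum_mul]
        rw [eval_eq_sum, sum_def]

theorem pow_mul_cauchyTransform_of_moments_eq_zero (hμ : ∀ᵐ t ∂μ, ‖t‖ ≤ R₀)
    (hw : Integrable w μ) (hz : R₀ < ‖z‖) {n : ℕ}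
    (hmoments : ∀ k < n, ∫ t, t ^ k * w t ∂μ = 0) :
    z ^ n * cauchyTransform μ w z = cauchyTransform μ (fun t => t ^ n * w t) z := by
  have sum_eq_zero : ∑ i ∈ Finset.range n, z ^ i * ∫ t, t ^ (n - 1 - i) * w t ∂μ = 0 := by
    refine Finset.sum_eq_zero fun i hi => ?_
    have hi := Finset.mem_range.1 hi
    rw [hmoments (n - 1 - i) (by lia), mul_zero]
  rw [cauchyTransform_pow_mul hμ hw hz, sum_eq_zero, add_zero]

theorem exists_norm_cauchyTransform_le_of_moments_eq_zero (hR₀ : 0 ≤ R₀)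
    (hμ : ∀ᵐ t ∂μ, ‖t‖ ≤ R₀) (hw : Integrable w μ) {n : ℕ}
    (hmoments : ∀ k < n, ∫ t, t ^ k * w t ∂μ = 0) {R : ℝ} (hR : R₀ < R) :
    ∃ C : ℝ, 0 < C ∧ ∀ z : 𝕜, R ≤ ‖z‖ → ‖cauchyTransform μ w z‖ ≤ C / ‖z‖ ^ (n + 1) := by
  set I := ∫ t, ‖t ^ n * w t‖ ∂μ
  have hI : 0 ≤ I := by positivity
  have hRpos : 0 < R := hR₀.trans_lt hR
  have hgap : 0 < R - R₀ := sub_pos.2 hR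
  refine ⟨I * (R / (R - R₀)) + 1, by positivity, fun z hz => ?_⟩
  have hzpos : 0 < ‖z‖ := hRpos.trans_le hz
  have hzR₀ : R₀ < ‖z‖ := hR.trans_le hz
  have ratio_le : ‖z‖ / (‖z‖ - R₀) ≤ R / (R - R₀) := by
    rw [div_le_div_iff₀ (sub_pos.2 hzR₀) hgap]
    nlinarith
  have scaled_le : ‖z‖ ^ n * ‖cauchyTransform μ w z‖ ≤ I / (‖z‖ - R₀) := by
    rw [← norm_pow, ← norm_mul, pow_mul_cauchyTransform_of_moments_eq_zero hμ hw hzR₀ hmoments]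
    exact norm_cauchyTransform_le hμ (integrable_continuous_mul hμ hw (continuous_pow n)) hzR₀
  rw [le_div_iff₀ (by positivity)]
  calc ‖cauchyTransform μ w z‖ * ‖z‖ ^ (n + 1)
      = ‖z‖ ^ n * ‖cauchyTransform μ w z‖ * ‖z‖ := by ring
    _ ≤ I / (‖z‖ - R₀) * ‖z‖ := by gcongr
    _ = I * (‖z‖ / (‖z‖ - R₀)) := by ring
    _ ≤ I * (R / (R - R₀)) := mul_le_mul_of_nonneg_left ratio_le hI
    _ ≤ I * (R / (R - R₀)) + 1 := (lt_add_one _).le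

end CauchyTransform

theorem orthogonality_implies_pade_interpolation_general {𝕜 : Type*} [RCLike 𝕜]
    {R₀ : ℝ} (hR₀ : 0 ≤ R₀) {μ : Measure 𝕜} (hμ : ∀ᵐ t ∂μ, ‖t‖ ≤ R₀)
    {h : 𝕜 → 𝕜} (hh : Integrable h μ) {n : ℕ} {q : 𝕜[X]} (hq : q.degree ≤ n)
    (horth : ∀ k < n, ∫ t, t ^ k * q.eval t * h t ∂μ = 0) :
    ∃ p : 𝕜[X], p.degree < n ∧
      (∀ z : 𝕜, R₀ < ‖z‖ → q.eval z * cauchyTransform μ h z - p.eval z =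
        cauchyTransform μ (fun t => q.eval t * h t) z) ∧
      ∀ R > R₀, ∃ C : ℝ, 0 < C ∧ ∀ z : 𝕜, R ≤ ‖z‖ →
        ‖q.eval z * cauchyTransform μ h z - p.eval z‖ ≤ C / ‖z‖ ^ (n + 1) := by
  have remainder_eq (z : 𝕜) (hz : R₀ < ‖z‖) := (cauchyTransform_eval_mul hμ hh hz q).symm
  refine ⟨padeNumerator μ h q, degree_padeNumerator_lt μ h hq, remainder_eq, fun R hR => ?_⟩
  obtain ⟨C, hC, hbound⟩ := exists_norm_cauchyTransform_le_of_moments_eq_zero hR₀ hμ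
    (integrable_continuous_mul hμ hh q.continuous) (by simpa only [mul_assoc] using horth) hR
  refine ⟨C, hC, fun z hz => ?_⟩
  rw [remainder_eq z (hR.trans_le hz)]
  exact hbound z hz

/-- If the nonzero polynomial `q` of degree at most `n` satisfies the
non-Hermitian orthogonality relations `∫ tᵏ q(t) h(t) dμ(t) = 0` for
`0 ≤ k ≤ n − 1`, then there is a polynomial `p` of degree at most `n − 1`
(i.e. `deg p < n`) such that `q·f − p` equals the function of the second kind
on `‖z‖ > R₀` and satisfies the Padé interpolation bound `O(‖z‖^{−(n+1)})`. -/
theorem orthogonality_implies_pade_interpolation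
    (R₀ : ℝ) (hR₀ : 0 < R₀) (μ : Measure ℂ) [IsFiniteMeasure μ]
    (hμsupp : μ (Metric.closedBall 0 R₀)ᶜ = 0)
    (h : ℂ → ℂ) (hmeas : Measurable h) (M : ℝ) (hbdd : ∀ t : ℂ, ‖h t‖ ≤ M)
    (f : ℂ → ℂ) (hf : ∀ z : ℂ, f z = ∫ t, h t / (t - z) ∂μ)
    (n : ℕ) (q : Polynomial ℂ) (hq0 : q ≠ 0) (hq : q.degree ≤ (n : ℕ))
    (horth : ∀ k : ℕ, k < n → ∫ t, t ^ k * q.eval t * h t ∂μ = 0) :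
    ∃ p : Polynomial ℂ, p.degree < (n : ℕ) ∧
      (∀ z : ℂ, R₀ < ‖z‖ →
        q.eval z * f z - p.eval z = ∫ t, q.eval t * h t / (t - z) ∂μ) ∧
      ∃ C : ℝ, 0 < C ∧ ∀ z : ℂ, 2 * R₀ ≤ ‖z‖ →
        ‖q.eval z * f z - p.eval z‖ ≤ C / ‖z‖ ^ (n + 1) := by
  obtain rfl : f = cauchyTransform μ h := funext hf
  have hμ : ∀ᵐ t ∂μ, ‖t‖ ≤ R₀ := by
    filter_upwards [mem_ae_iff.2 hμsupp] with t ht using mem_closedBall_zero_iff.1 ht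
  have hh : Integrable h μ := .of_bound hmeas.aestronglyMeasurable M (.of_forall hbdd)
  obtain ⟨p, hp, hrem, hdecay⟩ :=
    orthogonality_implies_pade_interpolation_general hR₀.le hμ hh hq horth
  exact ⟨p, hp, hrem, hdecay (2 * R₀) (by linarith)⟩
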